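/- Let R be an order in a quadratic number field K with maximal order O_K, and let S be an order with R ⊆ S ⊆ O_K of index n = [O_K : S]. Then #Pic(S) = (#Pic(O_K) / [O_K^× : S^×]) · n · ∏_{p | n} (1 − (Δ_K/p)·(1/p)), where (Δ_K/p) is the Kronecker symbol of the discriminant of K. -/

import Mathlib

open NumberField

/-- The Kronecker symbol `(D/p)` of a discriminant `D` at a prime `p` (Legendre symbol for
odd `p`, Kronecker symbol at `2`). -/
noncomputable def kronSym (D : ℤ) (p : ℕ) : ℤ :=
  if p = 2 then (if 2 ∣ D then 0 else if D % 8 = 1 ∨ D % 8 = 7 then 1 else -1)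
  else (Nat.card {x : ZMod p // x ^ 2 = (D : ZMod p)} : ℤ) - 1

namespace PicardOrder

open Submodule

section Semilocal

variable {A K : Type*} [CommRing A] [CommRing K] [Algebra A K] [FaithfulSMul A K]

/-- An invertible submodule is generated by one element modulo an ideal of finite index. -/
theorem exists_span_singleton_sup_mul (f : Ideal A) [Finite (A ⧸ f)] {I J : Submodule A K}
    (hIJ : I * J = 1) :
    ∃ a ∈ I, span A {a} ⊔ map (Algebra.linearMap A K) f * I = I := by
  classical
  have hinj := FaithfulSMul.algebraMap_injective A K
  have hfin : {M : Ideal A | M.IsMaximal ∧ f ≤ M}.Finite := by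
    refine (Set.finite_range (Ideal.comap (Ideal.Quotient.mk f))).subset ?_
    rintro M ⟨-, hM⟩
    exact ⟨M.map (Ideal.Quotient.mk f), by
      rw [Ideal.comap_map_of_surjective _ Ideal.Quotient.mk_surjective, ← RingHom.ker_eq_comap_bot,
        Ideal.mk_ker, sup_eq_left.2 hM]⟩
  set s := hfin.toFinset with hs
  have hmem : ∀ {M}, M ∈ s ↔ M.IsMaximal ∧ f ≤ M := by simp [hs]
  have coprime : ∀ M ∈ s, ∀ M' ∈ s.erase M, M ⊔ M' = ⊤ := by
    intro M hM M' hM'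
    rw [Finset.mem_erase] at hM'
    exact Ideal.IsMaximal.coprime_of_ne (hmem.1 hM).1 (hmem.1 hM'.2).1 hM'.1.symm
  have nle : ∀ M ∈ s, ¬⨅ M' ∈ s.erase M, M' ≤ M := fun M hM =>
    left_lt_sup.1 ((hmem.1 hM).1.lt_top.trans_eq (Ideal.sup_iInf_eq_top <| coprime M hM).symm)
  have hprod : ∀ a ∈ I, ∀ b ∈ J, ∃ c, algebraMap A K c = a * b := by
    intro a ha b hb
    obtain ⟨c, hc⟩ := mem_one.1 (hIJ.le (mul_mem_mul ha hb))
    exact ⟨c, hc⟩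
  have hnot : ∀ M ∈ s, ∃ a ∈ I, ∃ b ∈ J, a * b ∉ map (Algebra.linearMap A K) M := by
    intro M hM
    by_contra! h
    have h1 : (1 : K) ∈ map (Algebra.linearMap A K) M :=
      Submodule.mul_le.2 h (hIJ.ge (mem_one.2 ⟨1, map_one _⟩))
    obtain ⟨c, hc, hc1⟩ := h1
    rw [Algebra.linearMap_apply, ← map_one (algebraMap A K)] at hc1
    exact (hmem.1 hM).1.ne_top ((Ideal.eq_top_iff_one _).2 (hinj hc1 ▸ hc))
  choose! a ha b hb hm using hnot
  choose! u hu hum using fun M hM => SetLike.not_le_iff_exists.1 (nle M hM)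
  set v := ∑ M ∈ s, u M • a M with hv
  have hvI : v ∈ I := sum_mem fun M hM => smul_mem _ _ (ha M hM)
  have htop : comap (Algebra.linearMap A K) (span A {v} * J) ⊔ f = ⊤ := by
    by_contra h
    obtain ⟨M, hM, hle⟩ := Ideal.exists_le_maximal _ h
    have hMs : M ∈ s := hmem.2 ⟨hM, le_sup_right.trans hle⟩
    choose! c hc using fun M' (hM' : M' ∈ s) => hprod _ (ha M' hM') _ (hb M hMs)
    have hsum : ∑ M' ∈ s, u M' * c M' ∈ M := by
      refine hle (Ideal.mem_sup_left ?_)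
      rw [mem_comap, Algebra.linearMap_apply, mem_span_singleton_mul]
      refine ⟨b M, hb M hMs, ?_⟩
      rw [hv, Finset.sum_mul, map_sum]
      refine Finset.sum_congr rfl fun M' hM' => ?_
      rw [map_mul, hc M' hM', Algebra.smul_def, mul_assoc]
    rw [← s.add_sum_erase _ hMs] at hsum
    have hrest : ∑ M' ∈ s.erase M, u M' * c M' ∈ M := by
      refine sum_mem fun M' hM' => M.mul_mem_right _ ?_
      rw [Finset.mem_erase] at hM'
      have := hu M' hM'.2
      simp only [Ideal.mem_iInf, Finset.mem_erase] at this
      exact this M ⟨hM'.1.symm, hMs⟩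
    rcases hM.isPrime.mem_or_mem ((Ideal.add_mem_iff_left _ hrest).1 hsum) with h1 | h1
    · exact hum M hMs h1
    · exact hm M hMs ⟨c M, h1, hc M hMs⟩
  refine ⟨v, hvI, le_antisymm (sup_le ?_ ?_) ?_⟩
  · rwa [span_singleton_le_iff_mem]
  · refine Submodule.mul_le.2 ?_
    rintro _ ⟨x, -, rfl⟩ y hy
    simpa [← Algebra.smul_def] using I.smul_mem x hy
  · have h1 : (1 : Submodule A K) ≤ span A {v} * J ⊔ map (Algebra.linearMap A K) f := by
      rw [Submodule.one_le]
      obtain ⟨x, hx, y, hy, hxy⟩ := mem_sup.1 (htop.ge (mem_top (x := (1 : A))))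
      rw [← map_one (algebraMap A K), ← hxy, map_add]
      exact add_mem (mem_sup_left hx) (mem_sup_right (mem_map_of_mem hy))
    calc I = 1 * I := (one_mul _).symm
      _ ≤ (span A {v} * J ⊔ map (Algebra.linearMap A K) f) * I := mul_le_mul_left h1 I
      _ = span A {v} * (I * J) ⊔ map (Algebra.linearMap A K) f * I := by
        rw [Submodule.sup_mul, mul_assoc, mul_comm J]
      _ = _ := by rw [hIJ, mul_one]

end Semilocal

section Extension

variable {A B K : Type*} [CommRing A] [CommRing B] [CommRing K] [Algebra A B] [Algebra A K]
  [Algebra B K] [IsScalarTower A B K]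

variable (A B K) in
/-- Extension of scalars of submodules of a common overring. -/
def extend : Submodule A K →* Submodule B K where
  toFun I := span B I
  map_one' := by
    refine le_antisymm (span_le.2 ?_) ?_
    · intro x hx
      obtain ⟨y, rfl⟩ := mem_one.1 hx
      exact mem_one.2 ⟨algebraMap A B y, (IsScalarTower.algebraMap_apply A B K y).symm⟩
    · exact Submodule.one_le.2 (subset_span (Submodule.one_le.1 le_rfl))
  map_mul' I J := by
    rw [span_mul_span]
    refine le_antisymm (span_le.2 ?_) (span_mono ?_)
    · intro x hx
      refine Submodule.mul_induction_on hx
        (fun m hm n hn => subset_span (Set.mul_mem_mul hm hn)) fun x y hx hy => add_mem hx hy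
    · rintro _ ⟨x, hx, y, hy, rfl⟩
      exact mul_mem_mul hx hy

theorem extend_apply (I : Submodule A K) : extend A B K I = span B I := rfl

theorem extend_sup (I J : Submodule A K) :
    extend A B K (I ⊔ J) = extend A B K I ⊔ extend A B K J := by
  simp only [extend_apply]
  refine le_antisymm (span_le.2 ?_) (sup_le (span_mono (le_sup_left (a := I)))
    (span_mono (le_sup_right (a := I))))
  intro x hx
  obtain ⟨y, hy, z, hz, rfl⟩ := mem_sup.1 hx
  exact add_mem (mem_sup_left (subset_span hy)) (mem_sup_right (subset_span hz))

theorem extend_span (s : Set K) : extend A B K (span A s) = span B s := by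
  rw [extend_apply, Submodule.span_span_of_tower]

theorem extend_restrictScalars (J : Submodule B K) :
    extend A B K (J.restrictScalars A) = J := by
  rw [extend_apply, coe_restrictScalars, span_eq]

theorem mul_restrictScalars (I : Submodule A K) (J : Submodule B K) :
    I * J.restrictScalars A = (extend A B K I * J).restrictScalars A := by
  apply le_antisymm
  · refine Submodule.mul_le.2 fun m hm n hn => ?_
    rw [restrictScalars_mem, extend_apply]
    have hm' : m ∈ span B (I : Set K) := subset_span hm
    exact mul_mem_mul hm' hn
  · intro x hx
    rw [restrictScalars_mem, extend_apply] at hx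
    have key : ∀ m ∈ span B (I : Set K), ∀ n ∈ J, m * n ∈ I * J.restrictScalars A := by
      intro m hm
      induction hm using span_induction with
      | mem m hm => exact fun n hn => mul_mem_mul hm hn
      | zero => intro n _; rw [zero_mul]; exact zero_mem _
      | add a b _ _ ha hb => intro n hn; rw [add_mul]; exact add_mem (ha n hn) (hb n hn)
      | smul r a _ ha =>
        intro n hn
        have : r • a * n = a * r • n := by rw [smul_mul_assoc, mul_smul_comm]
        rw [this]
        exact ha _ (J.smul_mem r hn)
    induction hx using Submodule.mul_induction_on' with
    | mem_mul_mem m hm n hn => exact key m hm n hn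
    | add x _ y _ hx hy => exact add_mem hx hy

/-- The `A`-lattice generated by `a` and `F * J`. -/
def glue (A : Type*) {B K : Type*} [CommRing A] [CommRing B] [CommRing K] [Algebra A B]
    [Algebra A K] [Algebra B K] [IsScalarTower A B K] (F J : Submodule B K) (a : K) :
    Submodule A K :=
  span A {a} ⊔ (F * J).restrictScalars A

theorem extend_glue (F J : Submodule B K) (a : K) :
    extend A B K (glue A F J a) = span B {a} ⊔ F * J := by
  rw [glue, extend_sup, extend_span, extend_restrictScalars]

theorem glue_mul_glue {F J J' : Submodule B K} {a a' : K} (h : span B {a} ⊔ F * J = J)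
    (h' : span B {a'} ⊔ F * J' = J') :
    glue A F J a * glue A F J' a' = glue A F (J * J') (a * a') := by
  have ha' : span B {a'} ≤ J' := le_sup_left.trans h'.le
  have key : span B {a} * (F * J') + span B {a'} * (F * J) + F * J * (F * J') = F * (J * J') := by
    calc _ = F * ((span B {a} + F * J) * J' + J * span B {a'}) := by ring
      _ = F * (J * J' + J * span B {a'}) := by rw [Submodule.add_eq_sup (span B {a}), h]
      _ = F * (J * (J' + span B {a'})) := by ring
      _ = _ := by rw [Submodule.add_eq_sup J', sup_eq_left.2 ha']
  have hrs : ∀ X Y : Submodule B K, (X + Y).restrictScalars A =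
      X.restrictScalars A + Y.restrictScalars A := fun X Y => by
    ext x; simp [mem_sup]
  have hc : span A {a} * span A {a'} = span A {a * a'} := by
    rw [span_mul_span, Set.singleton_mul_singleton]
  rw [glue, glue, glue, ← key, hrs, hrs, ← hc, ← Submodule.add_eq_sup,
    ← Submodule.add_eq_sup, ← Submodule.add_eq_sup]
  have h1 := mul_restrictScalars (span A {a}) (F * J')
  have h2 := mul_restrictScalars (span A {a'}) (F * J)
  have h3 := mul_restrictScalars ((F * J).restrictScalars A) (F * J')
  rw [extend_span] at h1 h2
  rw [extend_restrictScalars] at h3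
  rw [← h1, ← h2, ← h3]
  ring

end Extension

section Conductor

variable {A B K : Type*} [CommRing A] [CommRing B] [Field K] [Algebra A B] [Algebra A K]
  [Algebra B K] [IsScalarTower A B K]

theorem mem_glue_one_iff {f : Ideal B} {b : B} {x : K} :
    x ∈ glue A (map (Algebra.linearMap B K) f) 1 (algebraMap B K b) ↔
      ∃ a : A, ∃ y ∈ f, algebraMap B K (algebraMap A B a * b + y) = x := by
  simp only [glue, mul_one, mem_sup, mem_span_singleton, restrictScalars_mem, mem_map,
    Algebra.linearMap_apply]
  constructor
  · rintro ⟨_, ⟨a, rfl⟩, _, ⟨y, hy, rfl⟩, rfl⟩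
    exact ⟨a, y, hy, by
      rw [map_add, map_mul, Algebra.smul_def, IsScalarTower.algebraMap_apply A B K]⟩
  · rintro ⟨a, y, hy, rfl⟩
    exact ⟨_, ⟨a, rfl⟩, _, ⟨y, hy, rfl⟩, by
      rw [map_add, map_mul, Algebra.smul_def, IsScalarTower.algebraMap_apply A B K]⟩

theorem glue_one_congr {f : Ideal B} {b c : B}
    (h : Ideal.Quotient.mk f b = Ideal.Quotient.mk f c) :
    glue A (map (Algebra.linearMap B K) f) 1 (algebraMap B K b) =
      glue A (map (Algebra.linearMap B K) f) 1 (algebraMap B K c) := by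
  have aux : ∀ b c : B, Ideal.Quotient.mk f b = Ideal.Quotient.mk f c →
      glue A (map (Algebra.linearMap B K) f) 1 (algebraMap B K b) ≤
      glue A (map (Algebra.linearMap B K) f) 1 (algebraMap B K c) := by
    intro b c h x hx
    rw [mem_glue_one_iff] at hx ⊢
    obtain ⟨a, y, hy, rfl⟩ := hx
    exact ⟨a, algebraMap A B a * (b - c) + y,
      add_mem (f.mul_mem_left _ (Ideal.Quotient.eq.1 h)) hy, by congr 1; ring⟩
  exact le_antisymm (aux b c h) (aux c b h.symm)

theorem glue_one_one {f : Ideal B} (hf : ∀ b ∈ f, b ∈ Set.range (algebraMap A B)) :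
    glue A (map (Algebra.linearMap B K) f) 1 1 = 1 := by
  rw [glue, ← Submodule.one_eq_span, mul_one]
  refine sup_eq_left.2 ?_
  rintro _ ⟨y, hy, rfl⟩
  obtain ⟨a, rfl⟩ := hf y hy
  exact mem_one.2 ⟨a, IsScalarTower.algebraMap_apply A B K a⟩

theorem isUnit_mk_iff [FaithfulSMul B K] {f : Ideal B} {b : B} :
    IsUnit (Ideal.Quotient.mk f b) ↔
      span B {algebraMap B K b} ⊔ map (Algebra.linearMap B K) f * 1 = 1 := by
  have hinj := FaithfulSMul.algebraMap_injective B K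
  have hle : span B {algebraMap B K b} ⊔ map (Algebra.linearMap B K) f * 1 ≤ 1 := by
    rw [mul_one]
    refine sup_le ((span_singleton_le_iff_mem _ _).2 (mem_one.2 ⟨b, rfl⟩)) ?_
    rintro _ ⟨y, -, rfl⟩
    exact mem_one.2 ⟨y, rfl⟩
  have h1 : (1 : Submodule B K) ≤ span B {algebraMap B K b} ⊔ map (Algebra.linearMap B K) f * 1 ↔
      ∃ c, ∃ y ∈ f, c * b + y = 1 := by
    rw [Submodule.one_le, mul_one]
    simp only [mem_sup, mem_span_singleton, mem_map, Algebra.linearMap_apply]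
    constructor
    · rintro ⟨_, ⟨a, rfl⟩, _, ⟨y, hy, rfl⟩, h⟩
      refine ⟨a, y, hy, hinj ?_⟩
      rw [map_add, map_mul, ← Algebra.smul_def, h, map_one]
    · rintro ⟨a, y, hy, h⟩
      refine ⟨_, ⟨a, rfl⟩, _, ⟨y, hy, rfl⟩, ?_⟩
      rw [Algebra.smul_def, ← map_mul, ← map_add, h, map_one]
  rw [← hle.ge_iff_eq, h1, isUnit_iff_exists_inv']
  constructor
  · rintro ⟨c, hc⟩
    obtain ⟨c, rfl⟩ := Ideal.Quotient.mk_surjective c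
    rw [← map_mul, ← map_one (Ideal.Quotient.mk f)] at hc
    exact ⟨c, 1 - c * b, Ideal.Quotient.eq.1 hc.symm, by ring⟩
  · rintro ⟨c, y, hy, h⟩
    refine ⟨Ideal.Quotient.mk f c, ?_⟩
    rw [← map_mul, ← map_one (Ideal.Quotient.mk f), eq_comm, Ideal.Quotient.eq, ← h]
    simpa using hy

variable (K) in
/-- A unit `u` modulo the conductor `f` defines the invertible submodule `A u + f`. -/
noncomputable def glueHom [FaithfulSMul B K] (f : Ideal B)
    (hf : ∀ b ∈ f, b ∈ Set.range (algebraMap A B)) : (B ⧸ f)ˣ →* (Submodule A K)ˣ :=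
  MonoidHom.toHomUnits
    { toFun u := glue A (map (Algebra.linearMap B K) f) 1
        (algebraMap B K (Function.surjInv Ideal.Quotient.mk_surjective (u : B ⧸ f)))
      map_one' := by
        rw [← glue_one_one (K := K) hf, ← map_one (algebraMap B K)]
        exact glue_one_congr (by simp [Function.surjInv_eq])
      map_mul' u v := by
        have hu := Function.surjInv_eq Ideal.Quotient.mk_surjective (u : B ⧸ f)
        have hv := Function.surjInv_eq Ideal.Quotient.mk_surjective (v : B ⧸ f)
        rw [glue_mul_glue (isUnit_mk_iff.1 (by rw [hu]; exact u.isUnit))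
          (isUnit_mk_iff.1 (by rw [hv]; exact v.isUnit)),
          one_mul, ← map_mul]
        exact glue_one_congr (by
          rw [map_mul, hu, hv, Function.surjInv_eq Ideal.Quotient.mk_surjective, Units.val_mul]) }

section

variable [FaithfulSMul B K] {f : Ideal B} (hf : ∀ b ∈ f, b ∈ Set.range (algebraMap A B))

theorem glueHom_apply {u : (B ⧸ f)ˣ} {b : B} (hb : Ideal.Quotient.mk f b = u) :
    (glueHom K f hf u : Submodule A K) =
      glue A (map (Algebra.linearMap B K) f) 1 (algebraMap B K b) :=
  glue_one_congr (by rw [Function.surjInv_eq Ideal.Quotient.mk_surjective, hb])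

theorem extend_glueHom (u : (B ⧸ f)ˣ) :
    Units.map (extend A B K) (glueHom K f hf u) = 1 := by
  obtain ⟨b, hb⟩ := Ideal.Quotient.mk_surjective (u : B ⧸ f)
  ext1
  rw [Units.coe_map, glueHom_apply hf hb, extend_glue, Units.val_one]
  exact isUnit_mk_iff.1 (hb ▸ u.isUnit)

theorem glueHom_eq_one_iff [Finite (B ⧸ f)] (u : (B ⧸ f)ˣ) :
    glueHom K f hf u = 1 ↔ ∃ a : A, Ideal.Quotient.mk f (algebraMap A B a) = u := by
  have hinj := FaithfulSMul.algebraMap_injective B K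
  constructor
  · intro h
    obtain ⟨b, hb⟩ := Ideal.Quotient.mk_surjective (u : B ⧸ f)
    have h1 : algebraMap B K b ∈ (1 : Submodule A K) := by
      rw [← Units.val_one, ← h, glueHom_apply hf hb, mem_glue_one_iff]
      exact ⟨1, 0, zero_mem _, by simp⟩
    obtain ⟨a, ha⟩ := mem_one.1 h1
    rw [IsScalarTower.algebraMap_apply A B K] at ha
    exact ⟨a, by rw [hinj ha, hb]⟩
  · rintro ⟨a, ha⟩
    have hle : (glueHom K f hf u : Submodule A K) ≤ 1 := by
      rw [glueHom_apply hf ha]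
      intro x hx
      obtain ⟨c, y, hy, rfl⟩ := mem_glue_one_iff.1 hx
      obtain ⟨d, rfl⟩ := hf y hy
      exact mem_one.2 ⟨c * a + d, by
        rw [IsScalarTower.algebraMap_apply A B K, map_add, map_mul]⟩
    have hpow : ∀ k : ℕ, (glueHom K f hf u : Submodule A K) ^ k ≤ 1 := by
      intro k
      induction k with
      | zero => simp
      | succ k ih => rw [pow_succ]; exact (mul_le_mul' ih hle).trans (by simp)
    refine Units.ext (le_antisymm hle ?_)
    obtain ⟨k, hk⟩ : ∃ k, orderOf u = k + 1 := ⟨_, (Nat.succ_pred (orderOf_pos u).ne').symm⟩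
    have : (glueHom K f hf u : Submodule A K) ^ (k + 1) = 1 := by
      rw [← Units.val_pow_eq_pow_val, ← map_pow, ← hk, pow_orderOf_eq_one, map_one, Units.val_one]
    rw [Units.val_one, ← this, pow_succ]
    exact (mul_le_mul' (hpow k) le_rfl).trans (by simp)

theorem glueHom_map_unit (v : Bˣ) :
    (glueHom K f hf (Units.map (Ideal.Quotient.mk f).toMonoidHom v) : Submodule A K) =
      span A {algebraMap B K v} := by
  have hv : span B {algebraMap B K v} = 1 := by
    rw [Submodule.span_singleton_eq_one_iff]
    exact ⟨v, rfl⟩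
  have h := mul_restrictScalars (span A {algebraMap B K v}) (map (Algebra.linearMap B K) f)
  rw [extend_span, hv, one_mul] at h
  rw [glueHom_apply hf (b := v) rfl, glue, mul_one, ← h]
  have h1 := glue_one_one (K := K) hf
  rw [glue, mul_one, ← Submodule.one_eq_span] at h1
  calc _ = span A {algebraMap B K v} *
        (1 ⊔ (map (Algebra.linearMap B K) f).restrictScalars A) := by
        rw [Submodule.mul_sup, mul_one]
    _ = _ := by rw [h1, mul_one]

include hf in
omit [FaithfulSMul B K] in
theorem exists_eq_glue [Finite (B ⧸ f)] [FaithfulSMul A K] (I : (Submodule A K)ˣ) :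
    ∃ a ∈ (I : Submodule A K), (I : Submodule A K) =
      glue A (map (Algebra.linearMap B K) f) (extend A B K I) a := by
  have : Finite (A ⧸ f.comap (algebraMap A B)) :=
    Finite.of_injective _ (Ideal.quotientMap_injective (I := f) (f := algebraMap A B))
  obtain ⟨a, ha, h⟩ := exists_span_singleton_sup_mul (f.comap (algebraMap A B)) I.mul_inv
  refine ⟨a, ha, ?_⟩
  have hF : map (Algebra.linearMap A K) (f.comap (algebraMap A B)) =
      (map (Algebra.linearMap B K) f).restrictScalars A := by
    ext x
    simp only [mem_map, Algebra.linearMap_apply, restrictScalars_mem, Ideal.mem_comap]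
    constructor
    · rintro ⟨y, hy, rfl⟩
      exact ⟨_, hy, (IsScalarTower.algebraMap_apply A B K y).symm⟩
    · rintro ⟨y, hy, rfl⟩
      obtain ⟨a, rfl⟩ := hf y hy
      exact ⟨a, hy, IsScalarTower.algebraMap_apply A B K a⟩
  rw [hF, mul_comm, mul_restrictScalars, mul_comm] at h
  exact h.symm

theorem exists_glueHom_eq [Finite (B ⧸ f)] [FaithfulSMul A K] (I : (Submodule A K)ˣ)
    (hI : Units.map (extend A B K) I = 1) : ∃ u, glueHom K f hf u = I := by
  obtain ⟨a, ha, h⟩ := exists_eq_glue hf I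
  have hE : extend A B K I = 1 := by simpa using congr_arg Units.val hI
  have ha1 : a ∈ (1 : Submodule B K) := by
    rw [← hE]
    exact subset_span ha
  obtain ⟨b, rfl⟩ := mem_one.1 ha1
  rw [hE] at h
  have hb : IsUnit (Ideal.Quotient.mk f b) := by
    rw [isUnit_mk_iff (K := K), ← extend_glue (A := A), ← h, hE]
  exact ⟨hb.unit, Units.ext (by rw [glueHom_apply hf (b := b) rfl, h])⟩

include hf in
theorem extend_surjective [Finite (B ⧸ f)] :
    Function.Surjective (Units.map (extend A B K)) := by
  intro J
  obtain ⟨a, ha, h⟩ := exists_span_singleton_sup_mul f J.mul_inv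
  obtain ⟨a', ha', h'⟩ := exists_span_singleton_sup_mul f J.inv_mul
  obtain ⟨b, hb⟩ := mem_one.1 (J.mul_inv.le (mul_mem_mul ha ha'))
  have key := congr_arg (extend B B K) (glue_mul_glue (A := B) h h')
  rw [map_mul, extend_glue, extend_glue, extend_glue, h, h', J.mul_inv, ← hb] at key
  obtain ⟨c, hc⟩ := isUnit_iff_exists_inv.1 (isUnit_mk_iff.2 key.symm)
  obtain ⟨c, rfl⟩ := Ideal.Quotient.mk_surjective c
  have hcu : IsUnit (Ideal.Quotient.mk f c) := isUnit_iff_exists_inv'.2 ⟨_, hc⟩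
  have key2 := congr_arg (extend B B K)
    (glue_mul_glue (A := B) h' (isUnit_mk_iff (K := K).1 hcu))
  rw [map_mul, extend_glue, extend_glue, extend_glue, h', isUnit_mk_iff (K := K).1 hcu,
    mul_one] at key2
  have hI := glue_mul_glue (A := A) h key2.symm
  rw [J.mul_inv, ← mul_assoc, ← hb, ← map_mul] at hI
  have hI1 : glue A (map (Algebra.linearMap B K) f) 1 (algebraMap B K (b * c)) = 1 := by
    rw [← glue_one_one (K := K) hf, ← map_one (algebraMap B K)]
    exact glue_one_congr (by rw [map_mul, hc, map_one])
  rw [hI1] at hI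
  refine ⟨Units.mkOfMulEqOne _ _ hI, Units.ext ?_⟩
  rw [Units.coe_map, Units.val_mkOfMulEqOne, extend_glue, h]

end

end Conductor

section Counting

variable {A B : Type*} (K : Type*) [CommRing A] [CommRing B] [Field K] [Algebra A B] [Algebra A K]
  [Algebra B K] [IsScalarTower A B K] [FaithfulSMul A K] [FaithfulSMul B K]

theorem unitsToPic_surjective (A K : Type*) [CommRing A] [Field K] [Algebra A K]
    [FaithfulSMul A K] : Function.Surjective (unitsToPic A K) := by
  rw [← MonoidHom.range_eq_top, range_unitsToPic, CommRing.relPic_eq_top]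

theorem unitsToPic_eq_one_iff {A K : Type*} [CommRing A] [Field K] [Algebra A K]
    [FaithfulSMul A K] (I : (Submodule A K)ˣ) :
    unitsToPic A K I = 1 ↔ ∃ x : Kˣ, (I : Submodule A K) = span A {(x : K)} := by
  rw [← MonoidHom.mem_ker, ker_unitsToPic, MonoidHom.mem_range]
  exact exists_congr fun x => by rw [Units.ext_iff, eq_comm]; rfl

variable {f : Ideal B} (hf : ∀ b ∈ f, b ∈ Set.range (algebraMap A B)) [Finite (B ⧸ f)]

theorem range_unitsToPic_comp_glueHom :
    ((unitsToPic A K).comp (glueHom K f hf)).range =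
      ((unitsToPic B K).comp (Units.map (extend A B K))).ker.map (unitsToPic A K) := by
  ext P
  constructor
  · rintro ⟨u, rfl⟩
    refine ⟨glueHom K f hf u, ?_, rfl⟩
    rw [SetLike.mem_coe, MonoidHom.mem_ker, MonoidHom.comp_apply, extend_glueHom, map_one]
  · rintro ⟨I, hI, rfl⟩
    rw [SetLike.mem_coe, MonoidHom.mem_ker, MonoidHom.comp_apply, unitsToPic_eq_one_iff] at hI
    obtain ⟨x, hx⟩ := hI
    set X : (Submodule A K)ˣ := Units.map (spanSingleton A).toMonoidHom x with hX
    have hXv : (X : Submodule A K) = span A {(x : K)} := rfl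
    have hX1 : unitsToPic A K X = 1 := (unitsToPic_eq_one_iff X).2 ⟨x, rfl⟩
    have hEX : Units.map (extend A B K) X = Units.map (extend A B K) I := by
      ext1
      rw [hx, Units.coe_map, hXv, extend_span]
    obtain ⟨u, hu⟩ := exists_glueHom_eq (K := K) hf (I * X⁻¹)
      (by rw [map_mul, map_inv, hEX, mul_inv_cancel])
    exact ⟨u, by rw [MonoidHom.comp_apply, hu, map_mul, map_inv, hX1, inv_one, mul_one]⟩

omit [Finite (B ⧸ f)] in
theorem ker_unitsToPic_comp_glueHom :
    ((unitsToPic A K).comp (glueHom K f hf)).ker =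
      (glueHom K f hf).ker ⊔ (Units.map (Ideal.Quotient.mk f).toMonoidHom).range := by
  have hunit : ∀ v : Bˣ, unitsToPic A K
      (glueHom K f hf (Units.map (Ideal.Quotient.mk f).toMonoidHom v)) = 1 := fun v =>
    (unitsToPic_eq_one_iff _).2 ⟨Units.map (algebraMap B K).toMonoidHom v, glueHom_map_unit hf v⟩
  refine le_antisymm (fun u hu => ?_) (sup_le (fun u hu => ?_) ?_)
  · rw [MonoidHom.mem_ker, MonoidHom.comp_apply, unitsToPic_eq_one_iff] at hu
    obtain ⟨x, hx⟩ := hu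
    have h1 : span B {(x : K)} = 1 := by
      have := congr_arg Units.val (extend_glueHom (K := K) hf u)
      rwa [Units.coe_map, hx, extend_span] at this
    rw [span_singleton_eq_one_iff] at h1
    obtain ⟨v, hv⟩ := h1
    rw [Subgroup.mem_sup]
    refine ⟨u * (Units.map (Ideal.Quotient.mk f).toMonoidHom v)⁻¹, ?_, _, ⟨v, rfl⟩, by group⟩
    rw [MonoidHom.mem_ker, map_mul, map_inv, mul_inv_eq_one]
    ext1
    rw [hx, glueHom_map_unit, ← hv]
  · rw [MonoidHom.mem_ker] at hu ⊢
    rw [MonoidHom.comp_apply, hu, map_one]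
  · rintro _ ⟨v, rfl⟩
    exact hunit v

theorem card_pic_mul_index_mul_card :
    Nat.card (CommRing.Pic A) *
        ((glueHom K f hf).ker.comap (Units.map (Ideal.Quotient.mk f).toMonoidHom)).index *
        Nat.card (glueHom K f hf).ker =
      Nat.card (CommRing.Pic B) * Nat.card (B ⧸ f)ˣ := by
  set Θ := (unitsToPic B K).comp (Units.map (extend A B K)) with hΘ
  set ψ := (unitsToPic A K).comp (glueHom K f hf) with hψ
  have hΘs : Function.Surjective Θ :=
    (unitsToPic_surjective B K).comp (extend_surjective hf)
  have h1 : Nat.card (CommRing.Pic A) = (unitsToPic A K).ker.index := by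
    rw [Subgroup.index_ker, MonoidHom.range_eq_top.2 (unitsToPic_surjective A K),
      Subgroup.card_top]
  have h2 : Nat.card (CommRing.Pic B) = Θ.ker.index := by
    rw [Subgroup.index_ker, MonoidHom.range_eq_top.2 hΘs, Subgroup.card_top]
  have hle : (unitsToPic A K).ker ≤ Θ.ker := by
    intro I hI
    rw [MonoidHom.mem_ker, unitsToPic_eq_one_iff] at hI
    obtain ⟨x, hx⟩ := hI
    rw [MonoidHom.mem_ker, hΘ, MonoidHom.comp_apply, unitsToPic_eq_one_iff]
    exact ⟨x, by rw [Units.coe_map, hx, extend_span]⟩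
  have h3 := Subgroup.relIndex_mul_index hle
  rw [Subgroup.relIndex_ker, ← range_unitsToPic_comp_glueHom K hf, ← hψ, ← h1, ← h2] at h3
  have h4 := ψ.ker.card_mul_index
  rw [Subgroup.index_ker] at h4
  have hker : (glueHom K f hf).ker ≤ ψ.ker :=
    le_sup_left.trans (ker_unitsToPic_comp_glueHom K hf).ge
  have h5 := Subgroup.relIndex_mul_relIndex ⊥ _ _ bot_le hker
  rw [Subgroup.relIndex_bot_left, Subgroup.relIndex_bot_left] at h5
  rw [Subgroup.index_comap, ← h3, ← h4, ← h5, ker_unitsToPic_comp_glueHom, sup_comm,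
    Subgroup.relIndex_sup_right]
  ring

end Counting

section UnitCount

/-- The norm form of the quadratic algebra with `ω ^ 2 = a + b ω`. -/
def normForm (R : Type*) [CommRing R] (a b : ℤ) (v : R × R) : R :=
  v.1 ^ 2 + b * v.1 * v.2 - a * v.2 ^ 2

/-- The number of units of the quadratic algebra with `ω ^ 2 = a + b ω` over `ZMod n`. -/
noncomputable def unitCount (a b : ℤ) (n : ℕ) : ℕ :=
  Nat.card {v : ZMod n × ZMod n // IsUnit (normForm (ZMod n) a b v)}

theorem map_normForm {R S : Type*} [CommRing R] [CommRing S] (φ : R →+* S) (a b : ℤ)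
    (v : R × R) : normForm S a b (φ v.1, φ v.2) = φ (normForm R a b v) := by
  simp [normForm]

theorem unitCount_mul_of_coprime (a b : ℤ) {m n : ℕ} (h : m.Coprime n) :
    unitCount a b (m * n) = unitCount a b m * unitCount a b n := by
  rw [unitCount, unitCount, unitCount, ← Nat.card_prod]
  let e := ZMod.chineseRemainder h
  let E : ZMod (m * n) × ZMod (m * n) ≃ (ZMod m × ZMod m) × (ZMod n × ZMod n) :=
    (e.toEquiv.prodCongr e.toEquiv).trans (Equiv.prodProdProdComm _ _ _ _)
  refine Nat.card_congr ((E.subtypeEquiv (fun v => ?_)).trans Equiv.subtypeProdEquivProd)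
  have h1 := map_normForm ((RingHom.fst _ _).comp e.toRingHom) a b v
  have h2 := map_normForm ((RingHom.snd _ _).comp e.toRingHom) a b v
  have h3 : IsUnit (normForm _ a b v) ↔ IsUnit (e (normForm _ a b v)) :=
    (MulEquiv.isUnit_map e).symm
  rw [h3, Prod.isUnit_iff]
  exact and_congr (Iff.of_eq (congr_arg IsUnit h1.symm)) (Iff.of_eq (congr_arg IsUnit h2.symm))

theorem card_preimage_mul_card {G H : Type*} [AddGroup G] [AddGroup H] [Finite G] [Finite H]
    (φ : G →+ H) (hφ : Function.Surjective φ) (P : H → Prop) :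
    Nat.card {x // P (φ x)} * Nat.card H = Nat.card G * Nat.card {y // P y} := by
  let s := Function.surjInv hφ
  have hs : ∀ y, φ (s y) = y := Function.surjInv_eq hφ
  have key : ∀ P : H → Prop, Nat.card {x // P (φ x)} = Nat.card {y // P y} * Nat.card φ.ker := by
    intro P
    rw [← Nat.card_prod]
    refine Nat.card_congr
      { toFun x := (⟨φ x.1, x.2⟩, ⟨x.1 - s (φ x.1), by simp [AddMonoidHom.mem_ker, hs]⟩)
        invFun z := ⟨z.2.1 + s z.1.1, by
          have := z.2.2
          rw [AddMonoidHom.mem_ker] at this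
          simp [hs, this, z.1.2]⟩
        left_inv x := by simp
        right_inv z := by
          obtain ⟨⟨y, hy⟩, ⟨k, hk⟩⟩ := z
          rw [AddMonoidHom.mem_ker] at hk
          ext <;> simp [hs, hk] }
  have h1 := key P
  have h2 := key fun _ => True
  rw [Nat.card_congr (Equiv.subtypeUnivEquiv fun _ => trivial),
    Nat.card_congr (Equiv.subtypeUnivEquiv fun _ => trivial)] at h2
  rw [h1, h2]
  ring

theorem unitCount_mul_of_dvd (a b : ℤ) {p n : ℕ} (hp : p.Prime) (hn : n ≠ 0) (h : p ∣ n) :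
    unitCount a b (p * n) = p ^ 2 * unitCount a b n := by
  have : NeZero n := ⟨hn⟩
  have : NeZero (p * n) := ⟨mul_ne_zero hp.ne_zero hn⟩
  set φ := ZMod.castHom (Dvd.intro_left p rfl : n ∣ p * n) (ZMod n) with hφ
  have hsurj : Function.Surjective φ := ZMod.ringHom_surjective φ
  have hunit : ∀ x, IsUnit (φ x) ↔ IsUnit x := by
    intro x
    obtain ⟨k, rfl⟩ := ZMod.natCast_zmod_surjective x
    rw [map_natCast, ZMod.isUnit_iff_coprime, ZMod.isUnit_iff_coprime, Nat.coprime_mul_iff_right]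
    exact ⟨fun hk => ⟨hk.coprime_dvd_right h, hk⟩, And.right⟩
  have hcard := card_preimage_mul_card (φ.toAddMonoidHom.prodMap φ.toAddMonoidHom)
    (hsurj.prodMap hsurj) fun v => IsUnit (normForm (ZMod n) a b v)
  have hset : Nat.card {x // IsUnit (normForm (ZMod n) a b
      ((φ.toAddMonoidHom.prodMap φ.toAddMonoidHom) x))} = unitCount a b (p * n) :=
    Nat.card_congr (Equiv.subtypeEquivRight fun v => by
      rw [← hunit, ← map_normForm]; rfl)
  rw [hset, Nat.card_prod, Nat.card_prod, Nat.card_zmod, Nat.card_zmod] at hcard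
  have hpos : 0 < n * n := Nat.mul_pos (Nat.pos_of_ne_zero hn) (Nat.pos_of_ne_zero hn)
  refine Nat.eq_of_mul_eq_mul_right hpos (hcard.trans ?_)
  rw [unitCount]
  ring

theorem card_roots_zmod_two : ∀ a b : ZMod 2, Nat.card {s : ZMod 2 // s ^ 2 + b * s - a = 0} =
    if b = 0 then 1 else if a = 0 then 2 else 0 := by
  simp only [Nat.card_eq_fintype_card]
  decide

theorem card_roots_eq_kronSym_add_one (a b : ℤ) {p : ℕ} (hp : p.Prime) :
    (Nat.card {s : ZMod p // s ^ 2 + b * s - a = 0} : ℤ) = kronSym (b ^ 2 + 4 * a) p + 1 := by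
  have : Fact p.Prime := ⟨hp⟩
  rw [kronSym]
  split_ifs with h2 hD hD'
  rotate_right
  · have h2' : (2 : ZMod p) ≠ 0 := by
      intro h
      have : (p : ℕ) ∣ 2 := (ZMod.natCast_eq_zero_iff 2 p).1 (by exact_mod_cast h)
      exact h2 ((Nat.prime_dvd_prime_iff_eq hp Nat.prime_two).1 this)
    rw [sub_add_cancel, Nat.cast_inj]
    refine Nat.card_congr (Equiv.subtypeEquiv
      ((Equiv.mulLeft₀ (2 : ZMod p) h2').trans (Equiv.addRight (b : ZMod p))) fun s => ?_)
    have h4 : (4 : ZMod p) ≠ 0 := by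
      rw [show (4 : ZMod p) = 2 * 2 by norm_num]; exact mul_ne_zero h2' h2'
    simp only [Equiv.trans_apply, Equiv.mulLeft₀_apply, Equiv.coe_addRight]
    push_cast
    rw [← sub_eq_zero (b := (b : ZMod p) ^ 2 + 4 * a), show (2 * s + (b : ZMod p)) ^ 2 -
      ((b : ZMod p) ^ 2 + 4 * a) = 4 * (s ^ 2 + b * s - a) by ring, mul_eq_zero_iff_left h4]
  · subst h2
    have hb : (b : ZMod 2) = 0 := by
      rw [ZMod.intCast_zmod_eq_zero_iff_dvd]
      have : (2 : ℤ) ∣ b ^ 2 := by omega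
      exact_mod_cast Int.prime_two.dvd_of_dvd_pow this
    rw [card_roots_zmod_two, if_pos hb]
    norm_num
  all_goals
    subst h2
    have hb : ¬ 2 ∣ b := fun hb => hD (Dvd.dvd.add (dvd_pow hb two_ne_zero) (by omega))
    obtain ⟨k, hk⟩ := Int.not_even_iff_odd.1 (even_iff_two_dvd.not.2 hb)
    obtain ⟨l, hl⟩ := Int.even_mul_succ_self k
    have hsq : b ^ 2 = 8 * l + 1 := by subst hk; linear_combination 4 * hl
    have hb' : (b : ZMod 2) ≠ 0 := by rwa [Ne, ZMod.intCast_zmod_eq_zero_iff_dvd]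
    rw [card_roots_zmod_two, if_neg hb']
  · have ha : (a : ZMod 2) = 0 := by
      rw [ZMod.intCast_zmod_eq_zero_iff_dvd]
      push_cast
      omega
    rw [if_pos ha]
    norm_num
  · have ha : (a : ZMod 2) ≠ 0 := by
      rw [Ne, ZMod.intCast_zmod_eq_zero_iff_dvd]
      push_cast
      omega
    rw [if_neg ha]
    norm_num

theorem unitCount_prime (a b : ℤ) {p : ℕ} (hp : p.Prime) :
    (unitCount a b p : ℤ) = (p - 1) * (p - kronSym (b ^ 2 + 4 * a) p) := by
  have : Fact p.Prime := ⟨hp⟩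
  have hcompl : Nat.card {v : ZMod p × ZMod p // normForm (ZMod p) a b v = 0} =
      1 + (p - 1) * Nat.card {s : ZMod p // s ^ 2 + b * s - a = 0} := by
    have hu : p - 1 = Nat.card {y : ZMod p // y ≠ 0} := by
      rw [Nat.card_congr unitsEquivNeZero.symm, Nat.card_eq_fintype_card, ZMod.card_units]
    rw [hu, ← Nat.card_prod, ← Nat.card_unique (α := Unit), ← Nat.card_sum]
    have hy : ∀ x y : ZMod p, y ≠ 0 → (normForm (ZMod p) a b (x, y) = 0 ↔
        (x / y) ^ 2 + b * (x / y) - a = 0) := by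
      intro x y hy
      rw [show (x / y) ^ 2 + b * (x / y) - a = normForm (ZMod p) a b (x, y) / y ^ 2 by
        simp only [normForm]; field_simp, div_eq_zero_iff]
      simp [hy]
    have h0 : ∀ x : ZMod p, normForm (ZMod p) a b (x, 0) = 0 ↔ x = 0 := by
      intro x; simp [normForm]
    symm
    refine Nat.card_congr (Equiv.ofBijective (Sum.elim (fun _ => ⟨(0, 0), (h0 0).2 rfl⟩)
      fun z => ⟨(z.2.1 * z.1.1, z.1.1), (hy _ _ z.1.2).2 ?_⟩) ⟨?_, ?_⟩)
    · rw [mul_div_cancel_right₀ _ z.1.2, z.2.2]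
    · rintro (_ | ⟨⟨y, hy⟩, s, hs⟩) (_ | ⟨⟨y', hy'⟩, s', hs'⟩) h
      · rfl
      · simp only [Sum.elim_inl, Sum.elim_inr, Subtype.mk.injEq, Prod.mk.injEq] at h
        exact (hy' h.2.symm).elim
      · simp only [Sum.elim_inl, Sum.elim_inr, Subtype.mk.injEq, Prod.mk.injEq] at h
        exact (hy h.2).elim
      · simp only [Sum.elim_inr, Subtype.mk.injEq, Prod.mk.injEq] at h
        obtain ⟨h1, rfl⟩ := h
        obtain rfl := mul_right_cancel₀ hy h1
        rfl
    · rintro ⟨⟨x, y⟩, hv⟩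
      by_cases hy0 : y = 0
      · subst hy0
        obtain rfl := (h0 x).1 hv
        exact ⟨Sum.inl (), rfl⟩
      · exact ⟨Sum.inr (⟨y, hy0⟩, ⟨x / y, (hy x y hy0).1 hv⟩), by simp [div_mul_cancel₀ x hy0]⟩
  have htot : unitCount a b p + Nat.card {v : ZMod p × ZMod p // normForm (ZMod p) a b v = 0} =
      p * p := by
    classical
    rw [unitCount, ← Nat.card_sum]
    simp only [isUnit_iff_ne_zero]
    rw [← Nat.card_congr (Equiv.sumComm _ _), Nat.card_congr (Equiv.sumCompl
      fun v : ZMod p × ZMod p => normForm (ZMod p) a b v = 0), Nat.card_prod, Nat.card_zmod]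
  have hr := card_roots_eq_kronSym_add_one a b hp
  rw [hcompl] at htot
  have hp1 : ((p - 1 : ℕ) : ℤ) = p - 1 := by rw [Nat.cast_sub hp.one_le, Nat.cast_one]
  have htot' := congr_arg (Nat.cast : ℕ → ℤ) htot
  push_cast [hp1] at htot'
  rw [hr] at htot'
  linear_combination htot'

theorem unitCount_eq (a b : ℤ) {n : ℕ} (hn : n ≠ 0) :
    (unitCount a b n : ℚ) = n.totient * (n * ∏ p ∈ n.primeFactors,
      (1 - (kronSym (b ^ 2 + 4 * a) p : ℚ) / p)) := by
  induction n using induction_on_primes with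
  | zero => exact (hn rfl).elim
  | one =>
    have : unitCount a b 1 = 1 := by
      rw [unitCount, Nat.card_eq_one_iff_unique]
      exact ⟨inferInstance, ⟨⟨(0, 0), isUnit_of_subsingleton _⟩⟩⟩
    simp [this]
  | prime_mul p n hp ih =>
    have hn' : n ≠ 0 := right_ne_zero_of_mul hn
    have hp0 : (p : ℚ) ≠ 0 := by exact_mod_cast hp.ne_zero
    specialize ih hn'
    by_cases h : p ∣ n
    · rw [unitCount_mul_of_dvd a b hp hn' h, Nat.totient_mul_of_prime_of_dvd hp h,
        Nat.primeFactors_mul hp.ne_zero hn', hp.primeFactors,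
        Finset.union_eq_right.2 (Finset.singleton_subset_iff.2
          (Nat.mem_primeFactors.2 ⟨hp, h, hn'⟩))]
      push_cast
      rw [ih]
      ring
    · have hc := (Nat.Prime.coprime_iff_not_dvd hp).2 h
      rw [unitCount_mul_of_coprime a b hc, Nat.totient_mul hc, hc.primeFactors_mul,
        Finset.prod_union hc.disjoint_primeFactors, hp.primeFactors, Finset.prod_singleton,
        Nat.totient_prime hp]
      push_cast [hp.one_le]
      have hprime := congr_arg (Int.cast : ℤ → ℚ) (unitCount_prime a b hp)
      push_cast at hprime
      rw [ih, hprime]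
      field_simp

end UnitCount

section Quadratic

open QuadraticAlgebra

/-- A free `ℤ`-algebra of rank two is a quadratic algebra. -/
theorem exists_algEquiv_quadraticAlgebra {O : Type*} [CommRing O] (B : Module.Basis (Fin 2) ℤ O) :
    ∃ a b : ℤ, Nonempty (QuadraticAlgebra ℤ a b ≃ₐ[ℤ] O) := by
  have hrepr : ∀ x : O, x = B.repr x 0 • B 0 + B.repr x 1 • B 1 := fun x => by
    rw [← Fin.sum_univ_two fun i => B.repr x i • B i, B.sum_repr]
  set α := B.repr 1 0
  set γ := B.repr 1 1
  have hone : (1 : O) = α • B 0 + γ • B 1 := hrepr 1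
  obtain ⟨u, v, huv⟩ : IsCoprime α γ := by
    rw [Int.isCoprime_iff_gcd_eq_one]
    obtain ⟨x, hx⟩ := Int.gcd_dvd_left α γ
    obtain ⟨y, hy⟩ := Int.gcd_dvd_right α γ
    have h : B 0 = (Int.gcd α γ : ℤ) • ((x • B 0 + y • B 1) * B 0) := by
      rw [← smul_mul_assoc, smul_add, smul_smul, smul_smul, ← hx, ← hy, ← hone, one_mul]
    have h1 := congr_arg (fun z => B.repr z 0) h
    simp only [Module.Basis.repr_self, Finsupp.single_eq_same, map_smul, Finsupp.smul_apply,
      smul_eq_mul] at h1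
    exact Nat.dvd_one.1 (Int.natCast_dvd_natCast.1 (Dvd.intro _ h1.symm))
  set w : O := u • B 1 - v • B 0 with hw
  have huv' := congr_arg (Int.cast : ℤ → O) huv
  push_cast at huv'
  have h0 : B 0 = u • (1 : O) - γ • w := by
    rw [hone, hw]
    simp only [zsmul_eq_mul]
    linear_combination (-(B 0) : O) * huv'
  have h1 : B 1 = v • (1 : O) + α • w := by
    rw [hone, hw]
    simp only [zsmul_eq_mul]
    linear_combination (-(B 1) : O) * huv'
  obtain ⟨a, b, hab⟩ : ∃ a b : ℤ, w * w = a • 1 + b • w := by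
    refine ⟨B.repr (w * w) 0 * u + B.repr (w * w) 1 * v,
      B.repr (w * w) 1 * α - B.repr (w * w) 0 * γ, ?_⟩
    conv_lhs => rw [hrepr (w * w), h0, h1]
    module
  have hlift : ∀ z, lift ⟨w, hab⟩ z = z.re • (1 : O) + z.im • w := fun z => by
    simp [lift]
  refine ⟨a, b, ⟨AlgEquiv.ofBijective (lift ⟨w, hab⟩) ⟨?_, ?_⟩⟩⟩
  · rw [injective_iff_map_eq_zero]
    intro z hz
    rw [hlift, hw] at hz
    have hz0 : z.re * α + z.im * -v = 0 := by
      simpa only [map_add, map_sub, map_smul, Finsupp.add_apply, Finsupp.sub_apply,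
        Finsupp.smul_apply, smul_eq_mul, Module.Basis.repr_self, Finsupp.single_apply, map_zero,
        Finsupp.zero_apply, one_ne_zero, if_true, if_false, mul_zero, mul_one, zero_sub]
        using congr_arg (fun x => B.repr x 0) hz
    have hz1 : z.re * γ + z.im * u = 0 := by
      simpa only [map_add, map_sub, map_smul, Finsupp.add_apply, Finsupp.sub_apply,
        Finsupp.smul_apply, smul_eq_mul, Module.Basis.repr_self, Finsupp.single_apply, map_zero,
        Finsupp.zero_apply, zero_ne_one, if_true, if_false, mul_zero, mul_one, sub_zero]
        using congr_arg (fun x => B.repr x 1) hz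
    ext
    · rw [re_zero]
      linear_combination u * hz0 + v * hz1 - z.re * huv
    · rw [im_zero]
      linear_combination α * hz1 - γ * hz0 - z.im * huv
  · intro x
    refine ⟨⟨B.repr x 0 * u + B.repr x 1 * v, B.repr x 1 * α - B.repr x 0 * γ⟩, ?_⟩
    conv_rhs => rw [hrepr x, h0, h1]
    change lift ⟨w, hab⟩ _ = _
    rw [hlift]
    module

theorem discr_basis (a b : ℤ) : Algebra.discr ℤ (QuadraticAlgebra.basis a b) = b ^ 2 + 4 * a := by
  have hb0 : QuadraticAlgebra.basis a b 0 = ⟨1, 0⟩ := by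
    ext <;> simp [QuadraticAlgebra.basis]
  have hb1 : QuadraticAlgebra.basis a b 1 = ⟨0, 1⟩ := by
    ext <;> simp [QuadraticAlgebra.basis]
  have htr : ∀ z : QuadraticAlgebra ℤ a b, Algebra.trace ℤ _ z = 2 * z.re + b * z.im := by
    intro z
    rw [Algebra.trace_eq_matrix_trace (QuadraticAlgebra.basis a b), Matrix.trace_fin_two]
    simp [Algebra.leftMulMatrix_eq_repr_mul, hb0, hb1]
    ring
  rw [Algebra.discr_def, Matrix.det_fin_two]
  simp [Algebra.traceMatrix_apply, Algebra.traceForm_apply, htr, hb0, hb1]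
  ring

/-- Reduction modulo `n` of a quadratic algebra. -/
def reduction (a b : ℤ) (n : ℕ) :
    QuadraticAlgebra ℤ a b →+* QuadraticAlgebra (ZMod n) (a : ZMod n) (b : ZMod n) where
  toFun z := ⟨z.re, z.im⟩
  map_one' := by ext <;> simp
  map_mul' z w := by ext <;> simp
  map_zero' := by ext <;> simp
  map_add' z w := by ext <;> simp

theorem reduction_surjective (a b : ℤ) (n : ℕ) : Function.Surjective (reduction a b n) := by
  rintro ⟨x, y⟩
  obtain ⟨x, rfl⟩ := ZMod.intCast_surjective x
  obtain ⟨y, rfl⟩ := ZMod.intCast_surjective y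
  exact ⟨⟨x, y⟩, rfl⟩

theorem ker_reduction (a b : ℤ) (n : ℕ) :
    RingHom.ker (reduction a b n) = Ideal.span {(n : QuadraticAlgebra ℤ a b)} := by
  ext z
  rw [RingHom.mem_ker, Ideal.mem_span_singleton]
  constructor
  · intro h
    have h1 := congr_arg QuadraticAlgebra.re h
    have h2 := congr_arg QuadraticAlgebra.im h
    obtain ⟨x, hx⟩ := (ZMod.intCast_zmod_eq_zero_iff_dvd z.re n).1 h1
    obtain ⟨y, hy⟩ := (ZMod.intCast_zmod_eq_zero_iff_dvd z.im n).1 h2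
    exact ⟨⟨x, y⟩, by ext <;> simp [hx, hy]⟩
  · rintro ⟨w, rfl⟩
    ext <;> simp [reduction]

theorem card_units_quadraticAlgebra (a b : ℤ) (n : ℕ) :
    Nat.card (QuadraticAlgebra (ZMod n) (a : ZMod n) (b : ZMod n))ˣ = unitCount a b n := by
  rw [unitCount, Nat.card_congr Submonoid.unitsTypeEquivIsUnitSubmonoid.toEquiv]
  exact Nat.card_congr ((equivProd _ _).subtypeEquiv fun z => by
    rw [IsUnit.mem_submonoid_iff, isUnit_iff_norm_isUnit, norm_def, normForm]
    simp [equivProd, sq, mul_assoc])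

end Quadratic

section Order

theorem dvd_of_mem_of_ker_le {G : Type*} [AddCommGroup G] (φ : G →+ ℤ)
    (hφ : Function.Surjective φ) {H : AddSubgroup G} (hH : φ.ker ≤ H) {x : G} (hx : x ∈ H) :
    (H.index : ℤ) ∣ φ x := by
  obtain ⟨g, hg⟩ := Int.subgroup_cyclic (H.map φ)
  rw [← AddSubgroup.zmultiples_eq_closure] at hg
  rw [← AddSubgroup.index_map_eq H hφ hH, hg, Int.index_zmultiples, Int.natCast_natAbs, abs_dvd,
    ← Int.mem_zmultiples_iff, ← hg]
  exact AddSubgroup.mem_map_of_mem φ hx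

variable {O : Type*} [CommRing O] {a b : ℤ} (e : O ≃+* QuadraticAlgebra ℤ a b)

theorem dvd_im_of_mem (S : Subalgebra ℤ O) {x : O} (hx : x ∈ S) :
    ((Subalgebra.toSubmodule S).toAddSubgroup.index : ℤ) ∣ (e x).im := by
  refine dvd_of_mem_of_ker_le
    ((QuadraticAlgebra.imₗ (a := a) (b := b)).toAddMonoidHom.comp e.toAddMonoidHom)
    (fun y => ⟨e.symm ⟨0, y⟩, by simp⟩) (fun y hy => ?_)
    (H := (Subalgebra.toSubmodule S).toAddSubgroup) hx
  have hy' : (e y).im = 0 := hy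
  have h : y = algebraMap ℤ O (e y).re := by
    apply e.injective
    rw [eq_intCast, map_intCast]
    ext <;> simp [hy']
  rw [h]
  exact S.algebraMap_mem _

include e in
/-- Comparison of the Picard groups of an order of index `n` and of its overorder. -/
theorem card_pic_order_mul (K : Type*) [Field K] [Algebra O K] [FaithfulSMul O K]
    (S : Subalgebra ℤ O) {n : ℕ} (hn : n = (Subalgebra.toSubmodule S).toAddSubgroup.index)
    (hn0 : n ≠ 0) (U : Subgroup Oˣ)
    (hU : ∀ u : Oˣ, u ∈ U ↔ ((u : O) ∈ S ∧ ((u⁻¹ : Oˣ) : O) ∈ S)) :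
    U.index ≠ 0 ∧ Nat.card (CommRing.Pic S) * U.index * n.totient =
      Nat.card (CommRing.Pic O) * unitCount a b n := by
  have : NeZero n := ⟨hn0⟩
  set ρ := (reduction a b n).comp e.toRingHom
  have hρs : Function.Surjective ρ := (reduction_surjective a b n).comp e.surjective
  let E := RingHom.quotientKerEquivOfSurjective hρs
  have : Finite (QuadraticAlgebra (ZMod n) (a : ZMod n) (b : ZMod n)) :=
    Finite.of_equiv _ (QuadraticAlgebra.equivProd _ _).symm
  have : Finite (O ⧸ RingHom.ker ρ) := Finite.of_equiv _ E.symm.toEquiv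
  have hfS : ∀ x ∈ RingHom.ker ρ, x ∈ S := by
    intro x hx
    have hx' : e x ∈ RingHom.ker (reduction a b n) := hx
    rw [ker_reduction, Ideal.mem_span_singleton] at hx'
    obtain ⟨w, hw⟩ := hx'
    have : x = n • e.symm w := by
      apply e.injective
      rw [map_nsmul, e.apply_symm_apply, hw, nsmul_eq_mul]
    rw [this, hn]
    exact AddSubgroup.nsmul_index_mem (Subalgebra.toSubmodule S).toAddSubgroup _
  have hf : ∀ x ∈ RingHom.ker ρ, x ∈ Set.range (algebraMap S O) := fun x hx =>
    ⟨⟨x, hfS x hx⟩, rfl⟩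
  have : FaithfulSMul S K := by
    rw [faithfulSMul_iff_algebraMap_injective, IsScalarTower.algebraMap_eq S O K]
    exact (FaithfulSMul.algebraMap_injective O K).comp Subtype.val_injective
  have key := card_pic_mul_index_mul_card K hf
  have hU' : (glueHom K (RingHom.ker ρ) hf).ker.comap
      (Units.map (Ideal.Quotient.mk (RingHom.ker ρ)).toMonoidHom) = U := by
    have hS : ∀ v : Oˣ, v ∈ (glueHom K (RingHom.ker ρ) hf).ker.comap
        (Units.map (Ideal.Quotient.mk (RingHom.ker ρ)).toMonoidHom) → (v : O) ∈ S := by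
      intro v hv
      rw [Subgroup.mem_comap, MonoidHom.mem_ker, glueHom_eq_one_iff] at hv
      obtain ⟨s, hs⟩ := hv
      have hs' := hfS _ (Ideal.Quotient.eq.1 hs)
      simpa using S.sub_mem s.2 hs'
    ext v
    rw [hU]
    refine ⟨fun hv => ⟨hS v hv, hS v⁻¹ (inv_mem hv)⟩, fun hv => ?_⟩
    rw [Subgroup.mem_comap, MonoidHom.mem_ker, glueHom_eq_one_iff]
    exact ⟨⟨v, hv.1⟩, rfl⟩
  have hcard : Nat.card (glueHom K (RingHom.ker ρ) hf).ker = n.totient := by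
    let ι : ZMod n →+* O ⧸ RingHom.ker ρ := E.symm.toRingHom.comp
      (algebraMap (ZMod n) (QuadraticAlgebra (ZMod n) (a : ZMod n) (b : ZMod n)))
    have hι : Function.Injective ι :=
      E.symm.injective.comp QuadraticAlgebra.algebraMap_injective
    have hrange : (glueHom K (RingHom.ker ρ) hf).ker = (Units.map ι.toMonoidHom).range := by
      ext u
      rw [MonoidHom.mem_ker, glueHom_eq_one_iff]
      constructor
      · rintro ⟨s, hs⟩
        have him : (ρ s).im = 0 := by
          change (((e s).im : ℤ) : ZMod n) = 0
          rw [ZMod.intCast_zmod_eq_zero_iff_dvd, hn]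
          exact dvd_im_of_mem e S s.2
        have hu : (u : O ⧸ RingHom.ker ρ) = ι (ρ s).re := by
          apply E.injective
          rw [← hs]
          change ρ s = E (E.symm (algebraMap _ _ _))
          rw [E.apply_symm_apply]
          ext
          · rfl
          · exact him
        have hunit : IsUnit (ρ s).re := by
          have h1 : IsUnit (ρ s) := by
            have := u.isUnit.map E
            rwa [← hs] at this
          rw [QuadraticAlgebra.isUnit_iff_norm_isUnit, QuadraticAlgebra.norm_def, him, mul_zero,
            mul_zero, add_zero, sub_zero] at h1
          exact isUnit_of_mul_isUnit_left h1
        exact ⟨hunit.unit, Units.ext hu.symm⟩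
      · rintro ⟨x, rfl⟩
        obtain ⟨k, hk⟩ := ZMod.intCast_surjective (x : ZMod n)
        refine ⟨k, ?_⟩
        change _ = ι x
        rw [← hk]
        simp
    rw [hrange, ← Nat.card_congr (MonoidHom.ofInjective (Units.map_injective hι)).toEquiv,
      Nat.card_eq_fintype_card, ZMod.card_units_eq_totient]
  have hunits : Nat.card (O ⧸ RingHom.ker ρ)ˣ = unitCount a b n := by
    rw [← card_units_quadraticAlgebra, Nat.card_congr (Units.mapEquiv E.toMulEquiv).toEquiv]
  rw [hU', hcard, hunits] at key
  refine ⟨?_, key⟩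
  rw [← hU', Subgroup.index_comap]
  exact Subgroup.FiniteIndex.index_ne_zero

end Order

end PicardOrder

/-- The Picard group formula for an order `S` of index `n` in the maximal order of a
quadratic number field `K`:
`#Pic(S) = #Pic(O_K)/[O_K^× : S^×] · n · ∏_{p ∣ n} (1 − (Δ_K/p)/p)`. -/
theorem stmt11 (K : Type*) [Field K] [NumberField K]
    (hdeg : Module.finrank ℚ K = 2)
    (S : Subalgebra ℤ (𝓞 K))
    (n : ℕ) (hn : n = (Subalgebra.toSubmodule S).toAddSubgroup.index) (hn0 : n ≠ 0)
    (U : Subgroup (𝓞 K)ˣ)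
    (hU : ∀ u : (𝓞 K)ˣ, u ∈ U ↔ ((u : 𝓞 K) ∈ S ∧ ((u⁻¹ : (𝓞 K)ˣ) : 𝓞 K) ∈ S)) :
    (Nat.card (ClassGroup ↥S) : ℚ) =
      (Nat.card (ClassGroup (𝓞 K)) : ℚ) / (U.index : ℚ) * n *
        ∏ p ∈ n.primeFactors, (1 - (kronSym (NumberField.discr K) p : ℚ) / p) := by
  obtain ⟨a, b, ⟨e⟩⟩ := PicardOrder.exists_algEquiv_quadraticAlgebra
    (Module.finBasisOfFinrankEq ℤ (𝓞 K) ((RingOfIntegers.rank K).trans hdeg))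
  have hdiscr : discr K = b ^ 2 + 4 * a := by
    rw [← discr_eq_discr K ((QuadraticAlgebra.basis a b).map e.toLinearEquiv),
      ← PicardOrder.discr_basis, Algebra.discr_eq_discr_of_algEquiv _ e]
    rfl
  obtain ⟨hU0, h⟩ := PicardOrder.card_pic_order_mul e.symm.toRingEquiv K S hn hn0 U hU
  have hφ : (n.totient : ℚ) ≠ 0 := by
    exact_mod_cast (Nat.totient_pos.2 (Nat.pos_of_ne_zero hn0)).ne'
  have hU0' : (U.index : ℚ) ≠ 0 := by exact_mod_cast hU0
  have h' := congr_arg (Nat.cast : ℕ → ℚ) h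
  push_cast at h'
  rw [PicardOrder.unitCount_eq a b hn0, ← hdiscr] at h'
  rw [Nat.card_congr (ClassGroup.equivPic S).toEquiv,
    Nat.card_congr (ClassGroup.equivPic (𝓞 K)).toEquiv]
  refine mul_right_cancel₀ (mul_ne_zero hU0' hφ) ?_
  rw [← mul_assoc, h']
  field_simp
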